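/- arXiv:1906.06461 — 7 statements merged into one kernel-verified Lean document; each statement's English description precedes it below -/
import Mathlib

section
/- For every feasible schedule of 𝒥 on m identical machines with completion times C, and for every subset A ⊆ 𝒥, the valid inequality ∑_{j ∈ A} p_j · C_j ≥ (1/(2m))·(∑_{j ∈ A} p_j)² + (1/2)·∑_{j ∈ A} p_j² holds. -/
/-!
On a single machine, order the jobs of a set `B` by completion time. When a job `j`
comes last, all positive-length jobs before it finish by `S j`, so their total length is at
most `S j` (`load_le`). Hence `C j` is at least the total length up to and including `j`, and
summing `p j * C j` gives `(∑ p)² / 2 + (∑ p²) / 2` (`single_machine`). For `m` machines, add these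
inequalities over the machines and bound `∑ₖ Pₖ²` below by `(∑ₖ Pₖ)² / m` (Cauchy–Schwarz), where
`Pₖ` is the load of machine `k`.
-/

/-- A feasible schedule of the jobs on `m` identical machines: a machine
assignment `a` and nonnegative start times `S` such that two distinct jobs on
the same machine do not overlap. -/
def FeasSched {Jb : Type*} (m : ℕ) (p : Jb → ℝ) (a : Jb → Fin m) (S : Jb → ℝ) : Prop :=
  (∀ j, 0 ≤ S j) ∧
  ∀ i j, i ≠ j → a i = a j → S i + p i ≤ S j ∨ S j + p j ≤ S i

/-- If a job of positive length does not overlap another job and completes no later than it, then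
it completes before the other starts. Positivity matters: a zero-length job may sit exactly at the
completion time of the other job. -/
lemma completion_le_start {s₁ p₁ s₂ p₂ : ℝ} (h₁ : 0 < p₁)
    (h : s₁ + p₁ ≤ s₂ ∨ s₂ + p₂ ≤ s₁) (hle : s₁ + p₁ ≤ s₂ + p₂) : s₁ + p₁ ≤ s₂ := by
  rcases h with h | h <;> linarith

/-- If all positive-length jobs of a one-machine set complete by time `T`, the total length is at
most `T`. -/
lemma load_le {Jb : Type*} (p S : Jb → ℝ) (hp : ∀ j, 0 ≤ p j) (hS : ∀ j, 0 ≤ S j)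
    (B : Finset Jb)
    (hB : ∀ i ∈ B, ∀ j ∈ B, i ≠ j → S i + p i ≤ S j ∨ S j + p j ≤ S i)
    (T : ℝ) (hT : 0 ≤ T) (hBT : ∀ i ∈ B, 0 < p i → S i + p i ≤ T) :
    ∑ i ∈ B, p i ≤ T := by
  classical
  induction B using Finset.induction_on_max_value (fun j => S j + p j) generalizing T with
  | empty => simpa using hT
  | insert j s hj hmax ih =>
    have hs : ∀ i ∈ s, ∀ k ∈ s, i ≠ k → S i + p i ≤ S k ∨ S k + p k ≤ S i :=
      fun i hi k hk => hB i (Finset.mem_insert_of_mem hi) k (Finset.mem_insert_of_mem hk)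
    rw [Finset.sum_insert hj]
    rcases (hp j).eq_or_lt with h0 | hpos
    · have := ih hs T hT fun i hi => hBT i (Finset.mem_insert_of_mem hi)
      linarith
    · have := ih hs (S j) (hS j) fun i hi hpi =>
        completion_le_start hpi
          (hB i (Finset.mem_insert_of_mem hi) j (Finset.mem_insert_self j s)
            (ne_of_mem_of_not_mem hi hj)) (hmax i hi)
      have := hBT j (Finset.mem_insert_self j s) hpos
      linarith

/-- The valid inequality for a set of jobs processed on one machine. -/
lemma single_machine {Jb : Type*} (p S : Jb → ℝ) (hp : ∀ j, 0 ≤ p j) (hS : ∀ j, 0 ≤ S j)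
    (B : Finset Jb)
    (hB : ∀ i ∈ B, ∀ j ∈ B, i ≠ j → S i + p i ≤ S j ∨ S j + p j ≤ S i) :
    (1 / 2) * (∑ j ∈ B, p j) ^ 2 + (1 / 2) * ∑ j ∈ B, p j ^ 2
      ≤ ∑ j ∈ B, p j * (S j + p j) := by
  classical
  induction B using Finset.induction_on_max_value (fun j => S j + p j) with
  | empty => simp
  | insert j s hj hmax ih =>
    have hs : ∀ i ∈ s, ∀ k ∈ s, i ≠ k → S i + p i ≤ S k ∨ S k + p k ≤ S i :=
      fun i hi k hk => hB i (Finset.mem_insert_of_mem hi) k (Finset.mem_insert_of_mem hk)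
    have hload : ∑ i ∈ s, p i ≤ S j :=
      load_le p S hp hS s hs (S j) (hS j) fun i hi hpi =>
        completion_le_start hpi
          (hB i (Finset.mem_insert_of_mem hi) j (Finset.mem_insert_self j s)
            (ne_of_mem_of_not_mem hi hj)) (hmax i hi)
    have := ih hs
    have := mul_le_mul_of_nonneg_left hload (hp j)
    simp only [Finset.sum_insert hj]
    linarith

/-- For every feasible schedule on `m` identical machines with
completion times `C j = S j + p j`, and every subset `A` of jobs,
`∑_{j ∈ A} p_j C_j ≥ (1/(2m)) (∑_{j ∈ A} p_j)² + (1/2) ∑_{j ∈ A} p_j²`. -/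
theorem valid_inequalities {Jb : Type*} [Fintype Jb] (m : ℕ) (hm : 1 ≤ m)
    (p : Jb → ℝ) (hp : ∀ j, 0 ≤ p j)
    (a : Jb → Fin m) (S : Jb → ℝ) (hfeas : FeasSched m p a S)
    (C : Jb → ℝ) (hC : ∀ j, C j = S j + p j)
    (A : Finset Jb) :
    (1 / (2 * (m : ℝ))) * (∑ j ∈ A, p j) ^ 2 + (1 / 2) * ∑ j ∈ A, (p j) ^ 2
      ≤ ∑ j ∈ A, p j * C j := by
  obtain ⟨hS, hno⟩ := hfeas
  have hfib (f : Jb → ℝ) : ∑ j ∈ A, f j = ∑ k : Fin m, ∑ j ∈ A with a j = k, f j :=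
    (Finset.sum_fiberwise A a f).symm
  have hmach (k : Fin m) := single_machine p S hp hS (A.filter (a · = k)) (by
    intro i hi j hj hij
    exact hno i j hij
      ((Finset.mem_filter.1 hi).2.trans (Finset.mem_filter.1 hj).2.symm))
  have hsum := Finset.sum_le_sum fun k (_ : k ∈ Finset.univ) => hmach k
  rw [Finset.sum_add_distrib, ← Finset.mul_sum, ← Finset.mul_sum, ← hfib, ← hfib] at hsum
  have hcs : (∑ j ∈ A, p j) ^ 2 ≤ m * ∑ k : Fin m, (∑ j ∈ A with a j = k, p j) ^ 2 := by
    rw [hfib p]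
    simpa using sq_sum_le_card_mul_sum_sq (s := (Finset.univ : Finset (Fin m)))
      (f := fun k => ∑ j ∈ A with a j = k, p j)
  have hm0 : (0 : ℝ) < m := by exact_mod_cast hm
  have hdiv : (1 / (2 * (m : ℝ))) * (∑ j ∈ A, p j) ^ 2
      ≤ (1 / 2) * ∑ k : Fin m, (∑ j ∈ A with a j = k, p j) ^ 2 := by
    calc _ ≤ (1 / (2 * (m : ℝ))) * (m * ∑ k : Fin m, (∑ j ∈ A with a j = k, p j) ^ 2) := by
          gcongr
      _ = _ := by field_simp
  simp only [hC]
  linarith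
end

section
/- Let (a, S) be a feasible schedule of 𝒥 on m identical machines and let < be a linear order on 𝒥. Suppose no machine is unnecessarily idle with respect to the list order: for every job j, every machine k, and every time t with 0 ≤ t < S_j, there exists a job i with i < j, a_i = k, and S_i ≤ t < S_i + p_i. Then m·S_j ≤ ∑_{i < j} p_i for every job j. -/
/-- If finitely many intervals `[S i, S i + p i)` cover `[0, T)`, their total length is at
least `T`, by subadditivity of Lebesgue measure. -/
lemma le_sum_of_Ico_cover {Jb : Type*} (s : Finset Jb) (p S : Jb → ℝ) (hp : ∀ j, 0 ≤ p j)
    (T : ℝ) (h : ∀ t, 0 ≤ t → t < T → ∃ i ∈ s, S i ≤ t ∧ t < S i + p i) :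
    T ≤ ∑ i ∈ s, p i := by
  have hsub : Set.Ico 0 T ⊆ ⋃ i ∈ s, Set.Ico (S i) (S i + p i) := by
    intro t ht
    obtain ⟨i, hi, h1, h2⟩ := h t ht.1 ht.2
    exact Set.mem_biUnion hi ⟨h1, h2⟩
  have hvol := (MeasureTheory.measure_mono (μ := MeasureTheory.volume) hsub).trans
    (MeasureTheory.measure_biUnion_finset_le s _)
  simp only [Real.volume_Ico, sub_zero, add_sub_cancel_left] at hvol
  rw [← ENNReal.ofReal_sum_of_nonneg fun i _ => hp i] at hvol
  exact (ENNReal.ofReal_le_ofReal_iff (Finset.sum_nonneg fun i _ => hp i)).1 hvol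

/-- If, with respect to a linear (list) order on the jobs, no machine
is ever idle before the start of a job `j` without processing some earlier-listed
job, then `m · S_j ≤ ∑_{i < j} p_i` for every job `j`. -/
theorem list_schedule_start_bound {Jb : Type*} [Fintype Jb] [LinearOrder Jb]
    (m : ℕ) (hm : 1 ≤ m)
    (p : Jb → ℝ) (hp : ∀ j, 0 ≤ p j)
    (a : Jb → Fin m) (S : Jb → ℝ) (hfeas : FeasSched m p a S)
    (hbusy : ∀ j : Jb, ∀ k : Fin m, ∀ t : ℝ, 0 ≤ t → t < S j →
      ∃ i : Jb, i < j ∧ a i = k ∧ S i ≤ t ∧ t < S i + p i) :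
    ∀ j : Jb, (m : ℝ) * S j ≤ ∑ i ∈ Finset.univ.filter (· < j), p i := by
  intro j
  -- The jobs before `j` that run on a fixed machine `k` cover `[0, S j)`.
  have hk : ∀ k : Fin m, S j ≤ ∑ i ∈ (Finset.univ.filter (· < j)).filter (a · = k), p i := by
    intro k
    refine le_sum_of_Ico_cover _ p S hp _ fun t h0 ht => ?_
    obtain ⟨i, hij, hik, h1, h2⟩ := hbusy j k t h0 ht
    exact ⟨i, by simp [hij, hik], h1, h2⟩
  rw [← Finset.sum_fiberwise (Finset.univ.filter (· < j)) a p]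
  calc (m : ℝ) * S j = ∑ _k : Fin m, S j := by simp
    _ ≤ _ := Finset.sum_le_sum fun k _ => hk k
end

section
/- Let 𝒥 = {1, …, n} with processing times p_j ≥ 0 and let m ≥ 1. Let C^LP : 𝒥 → ℝ satisfy C^LP_j ≥ p_j for all j and ∑_{j ∈ A} p_j · C^LP_j ≥ (1/(2m))·(∑_{j ∈ A} p_j)² + (1/2)·∑_{j ∈ A} p_j² for every subset A ⊆ 𝒥, and suppose the midpoints M_j = C^LP_j − p_j/2 are nondecreasing in j. If S : 𝒥 → ℝ satisfies S_j ≥ 0 and m·S_j ≤ ∑_{i < j} p_i for every j, then the completion times C_j := S_j + p_j satisfy C_j ≤ 2·C^LP_j for every job j. -/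
/-!
Take `A = {i | i < j}` in the valid inequality, with total load `P`. Moving the term
`(1/2) ∑ p_i²` to the right-hand side gives `P² / (2m) ≤ ∑_{i < j} p_i M_i`, which is at most
`P M_j` because the midpoints are nondecreasing. If `P > 0`, dividing by `P` yields
`S_j ≤ P / m ≤ 2 M_j = 2 C^LP_j - p_j`. If `P = 0`, then `S_j ≤ 0` and `p_j ≤ C^LP_j` suffices.
-/

/-- Let `C^LP` satisfy `C^LP_j ≥ p_j` and the valid inequalities,
with nondecreasing midpoints `M_j = C^LP_j - p_j/2`. If the start times `S`
satisfy `S_j ≥ 0` and `m·S_j ≤ ∑_{i < j} p_i`, then the completion times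
`C_j = S_j + p_j` satisfy `C_j ≤ 2·C^LP_j` for every job `j`. -/
theorem lp_list_completion_bound (n m : ℕ) (hm : 1 ≤ m)
    (p CLP : Fin n → ℝ) (hp : ∀ j, 0 ≤ p j)
    (hCp : ∀ j, p j ≤ CLP j)
    (hineq : ∀ A : Finset (Fin n),
      (1 / (2 * (m : ℝ))) * (∑ j ∈ A, p j) ^ 2 + (1 / 2) * ∑ j ∈ A, (p j) ^ 2
        ≤ ∑ j ∈ A, p j * CLP j)
    (hmono : Monotone fun j => CLP j - p j / 2)
    (S : Fin n → ℝ) (hS0 : ∀ j, 0 ≤ S j)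
    (hlist : ∀ j, (m : ℝ) * S j ≤ ∑ i ∈ Finset.Iio j, p i) :
    ∀ j, S j + p j ≤ 2 * CLP j := by
  intro j
  have hm0 : (0 : ℝ) < m := by exact_mod_cast hm
  have hj := hlist j
  have hA := hineq (Finset.Iio j)
  have hsum : ∑ i ∈ Finset.Iio j, p i * CLP i
      ≤ (1 / 2) * ∑ i ∈ Finset.Iio j, (p i) ^ 2
        + (∑ i ∈ Finset.Iio j, p i) * (CLP j - p j / 2) := by
    rw [Finset.mul_sum, Finset.sum_mul, ← Finset.sum_add_distrib]
    refine Finset.sum_le_sum fun i hi => ?_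
    have hij : CLP i - p i / 2 ≤ CLP j - p j / 2 := hmono (Finset.mem_Iio.mp hi).le
    linarith [mul_le_mul_of_nonneg_left hij (hp i)]
  have hP : 0 ≤ ∑ i ∈ Finset.Iio j, p i := Finset.sum_nonneg fun i _ => hp i
  generalize ∑ i ∈ Finset.Iio j, p i = P at *
  rcases hP.eq_or_lt with rfl | hP
  · -- No load precedes `j`, so `S j ≤ 0` and the bound follows from `p j ≤ CLP j`.
    have hS : S j ≤ 0 := by
      by_contra! h
      linarith [mul_pos hm0 h]
    linarith [hp j, hCp j]
  · have hmid : P / (2 * m) ≤ CLP j - p j / 2 := by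
      refine le_of_mul_le_mul_left ?_ hP
      have e : P * (P / (2 * m)) = 1 / (2 * (m : ℝ)) * P ^ 2 := by ring
      linarith
    have hS : S j ≤ P / m := by
      rw [le_div_iff₀ hm0]
      linarith
    have e : P / m = 2 * (P / (2 * m)) := by field_simp
    linarith
end

section
/- Let 𝒥 = {1, …, n} be jobs with processing times p_j ≥ 0, partitioned into islands with weights ω_J ≥ 0 and partial order ⪯, and let m ≥ 1. Suppose C^LP : 𝒥 → ℝ and E^LP (indexed by islands) satisfy: C^LP_j ≥ p_j for all j; E^LP_J ≥ C^LP_j for all j ∈ J; E^LP_J ≥ E^LP_{J'} whenever J' ⪯ J; ∑_{j ∈ A} p_j·C^LP_j ≥ (1/(2m))·(∑_{j ∈ A} p_j)² + (1/2)·∑_{j ∈ A} p_j² for every A ⊆ 𝒥; and (C^LP, E^LP) minimizes ∑_J ω_J·E'_J among all pairs (C', E') satisfying these four families of constraints. Suppose further that the midpoints M_j = C^LP_j − p_j/2 are nondecreasing in j, and let (a, S) be a feasible schedule of 𝒥 on m machines satisfying m·S_j ≤ ∑_{i < j} p_i for every j, with completion times C_j = S_j + p_j. Then ∑_J ω_J·E_J(C)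 ≤ 2·∑_J ω_J·E_J(C') for every feasible schedule of 𝒥 on m machines with completion times C'. (The LP-based list scheduling algorithm is a 2-approximation.) -/
/-!
The midpoints `M j = CLP j - p j / 2` turn the parallel inequalities into
`(∑_{A} p)² / (2m) ≤ ∑_{A} p * M`. For `A = {i | i < j}`, where every `M i ≤ M j`, this gives
`∑_{i<j} p i ≤ 2 m M j` (`sum_Iio_le_midpoint`). The list scheduling bound then yields
`S j ≤ 2 M j`, that is `S j + p j ≤ 2 CLP j`, so each energization time is at most twice its
LP value.

It remains that the LP optimum is a lower bound for every feasible schedule: its completion and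
energization times satisfy all LP constraints. The parallel inequality for a schedule
(`parallel_ineq`) is the single-machine inequality (`single_machine_ineq`) summed over machines,
followed by Cauchy–Schwarz for the machine loads.
-/

/-- Energization time of island `K` for completion times `C`. -/
noncomputable def energ {Jb I : Type*} [PartialOrder I]
    (isl : Jb → I) (C : Jb → ℝ) (K : I) : ℝ :=
  ⨆ j : {j : Jb // isl j ≤ K}, C j.1

/-- On a single machine the total load is at most any common deadline, and the completion times
satisfy the single-machine parallel inequality. The two parts are proved together by removing the
job that starts last: the load bound for the remaining jobs, with deadline the start of the removed
one, is what the inductive step of the inequality needs. -/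
lemma single_machine_ineq {Jb : Type*} [DecidableEq Jb] (p S : Jb → ℝ) (hp : ∀ j, 0 ≤ p j)
    (hS : ∀ j, 0 ≤ S j) (A : Finset Jb)
    (hdisj : ∀ i ∈ A, ∀ j ∈ A, i ≠ j → S i + p i ≤ S j ∨ S j + p j ≤ S i) :
    (∀ T, 0 ≤ T → (∀ i ∈ A, S i + p i ≤ T) → ∑ i ∈ A, p i ≤ T) ∧
    (1 / 2) * (∑ j ∈ A, p j) ^ 2 + (1 / 2) * ∑ j ∈ A, (p j) ^ 2
      ≤ ∑ j ∈ A, p j * (S j + p j) := by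
  induction A using Finset.induction_on_max_value S with
  | empty => simp
  | insert j A hj hmax ih =>
    obtain ⟨ih1, ih2⟩ := ih fun i hi k hk =>
      hdisj i (Finset.mem_insert_of_mem hi) k (Finset.mem_insert_of_mem hk)
    simp only [Finset.sum_insert hj]
    -- A job of length zero may share its start time with others, but contributes nothing.
    rcases (hp j).eq_or_lt with h0 | hpos
    · simp only [← h0]
      refine ⟨fun T hT h => ?_, ?_⟩
      · simpa using ih1 T hT fun i hi => h i (Finset.mem_insert_of_mem hi)
      · simpa using ih2
    · have hload : ∑ i ∈ A, p i ≤ S j := by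
        refine ih1 _ (hS j) fun i hi => ?_
        have hij : i ≠ j := fun h => hj (h ▸ hi)
        rcases hdisj i (Finset.mem_insert_of_mem hi) j (Finset.mem_insert_self _ _) hij with h | h
        · exact h
        · linarith [hmax i hi]
      refine ⟨fun T _ h => ?_, ?_⟩
      · linarith [h j (Finset.mem_insert_self _ _)]
      · nlinarith [mul_le_mul_of_nonneg_left hload hpos.le]

/-- Completion times of a feasible schedule on `m` machines satisfy the LP's parallel
inequalities. -/
lemma parallel_ineq {Jb : Type*} [DecidableEq Jb] {m : ℕ} (hm : 1 ≤ m) (p : Jb → ℝ)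
    (hp : ∀ j, 0 ≤ p j) (a : Jb → Fin m) (S : Jb → ℝ) (hfeas : FeasSched m p a S)
    (A : Finset Jb) :
    (1 / (2 * (m : ℝ))) * (∑ j ∈ A, p j) ^ 2 + (1 / 2) * ∑ j ∈ A, (p j) ^ 2
      ≤ ∑ j ∈ A, p j * (S j + p j) := by
  have hm0 : (0 : ℝ) < m := by exact_mod_cast hm
  have hmach (k : Fin m) := (single_machine_ineq p S hp hfeas.1 (A.filter fun j => a j = k)
    fun i hi j hj hij => hfeas.2 i j hij
      ((Finset.mem_filter.1 hi).2.trans (Finset.mem_filter.1 hj).2.symm)).2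
  have hsum := Finset.sum_le_sum fun k (_ : k ∈ Finset.univ) => hmach k
  rw [Finset.sum_add_distrib, ← Finset.mul_sum, ← Finset.mul_sum,
    Finset.sum_fiberwise, Finset.sum_fiberwise] at hsum
  have hcs := sq_sum_le_card_mul_sum_sq (s := (Finset.univ : Finset (Fin m)))
    (f := fun k => ∑ j ∈ A with a j = k, p j)
  rw [Finset.sum_fiberwise, Finset.card_univ, Fintype.card_fin] at hcs
  have hload : (1 / (2 * (m : ℝ))) * (∑ j ∈ A, p j) ^ 2
      ≤ (1 / 2) * ∑ k, (∑ j ∈ A with a j = k, p j) ^ 2 := by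
    rw [one_div_mul_eq_div, div_le_iff₀ (by positivity)]
    linarith
  linarith

lemma sum_Iio_le_midpoint {n m : ℕ} (hm : 1 ≤ m) (p C : Fin n → ℝ) (hp : ∀ j, 0 ≤ p j)
    (h1 : ∀ j, p j ≤ C j)
    (h4 : ∀ A : Finset (Fin n),
      (1 / (2 * (m : ℝ))) * (∑ j ∈ A, p j) ^ 2 + (1 / 2) * ∑ j ∈ A, (p j) ^ 2
        ≤ ∑ j ∈ A, p j * C j)
    (hmono : Monotone fun j => C j - p j / 2) (j : Fin n) :
    ∑ i ∈ Finset.Iio j, p i ≤ m * (2 * (C j - p j / 2)) := by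
  have hm0 : (0 : ℝ) < m := by exact_mod_cast hm
  have hP : 0 ≤ ∑ i ∈ Finset.Iio j, p i := Finset.sum_nonneg fun i _ => hp i
  have hle : ∑ i ∈ Finset.Iio j, p i * (C i - p i / 2)
      ≤ (∑ i ∈ Finset.Iio j, p i) * (C j - p j / 2) := by
    rw [Finset.sum_mul]
    exact Finset.sum_le_sum fun i hi =>
      mul_le_mul_of_nonneg_left (hmono (Finset.mem_Iio.1 hi).le) (hp i)
  have hmid : ∑ i ∈ Finset.Iio j, p i * (C i - p i / 2)
      = ∑ i ∈ Finset.Iio j, p i * C i - (1 / 2) * ∑ i ∈ Finset.Iio j, (p i) ^ 2 := by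
    rw [Finset.mul_sum, ← Finset.sum_sub_distrib]
    exact Finset.sum_congr rfl fun i _ => by ring
  have hsq : (1 / (2 * (m : ℝ))) * (∑ i ∈ Finset.Iio j, p i) ^ 2
      ≤ (∑ i ∈ Finset.Iio j, p i) * (C j - p j / 2) := by
    linarith [h4 (Finset.Iio j)]
  rcases hP.eq_or_lt with h0 | hpos
  · rw [← h0]
    have : 0 ≤ C j - p j / 2 := by linarith [h1 j, hp j]
    positivity
  · rw [one_div_mul_eq_div, div_le_iff₀ (by positivity)] at hsq
    refine le_of_mul_le_mul_left ?_ hpos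
    linarith

lemma le_energ {Jb I : Type*} [Finite Jb] [PartialOrder I] (isl : Jb → I) (C : Jb → ℝ)
    {K : I} {j : Jb} (hj : isl j ≤ K) : C j ≤ energ isl C K :=
  le_ciSup (f := fun j : {j : Jb // isl j ≤ K} => C j.1) (Set.finite_range _).bddAbove ⟨j, hj⟩

lemma energ_le {Jb I : Type*} [PartialOrder I] {isl : Jb → I}
    (hsurj : Function.Surjective isl) {C : Jb → ℝ} {K : I} {b : ℝ}
    (h : ∀ j, isl j ≤ K → C j ≤ b) : energ isl C K ≤ b := by
  obtain ⟨j, hj⟩ := hsurj K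
  have : Nonempty {j : Jb // isl j ≤ K} := ⟨⟨j, hj.le⟩⟩
  exact ciSup_le fun j => h j.1 j.2

/-- The LP-based list scheduling algorithm is a 2-approximation:
if `(C^LP, E^LP)` is optimal for the LP relaxation, the LP midpoints are
nondecreasing in the job index, and `(a, S)` is a feasible `m`-machine schedule
produced by list scheduling (so `m·S_j ≤ ∑_{i<j} p_i`), then the weighted total
energization time of the resulting completion times is at most twice that of any
feasible `m`-machine schedule. -/
theorem lp_list_two_approx {I : Type*} [Fintype I] [Nonempty I] [PartialOrder I]
    (n m : ℕ) (hm : 1 ≤ m)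
    (isl : Fin n → I) (hsurj : Function.Surjective isl)
    (p : Fin n → ℝ) (hp : ∀ j, 0 ≤ p j)
    (ω : I → ℝ) (hω : ∀ K, 0 ≤ ω K)
    (CLP : Fin n → ℝ) (ELP : I → ℝ)
    (h1 : ∀ j, p j ≤ CLP j)
    (h2 : ∀ j, CLP j ≤ ELP (isl j))
    (h3 : ∀ K K' : I, K' ≤ K → ELP K' ≤ ELP K)
    (h4 : ∀ A : Finset (Fin n),
      (1 / (2 * (m : ℝ))) * (∑ j ∈ A, p j) ^ 2 + (1 / 2) * ∑ j ∈ A, (p j) ^ 2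
        ≤ ∑ j ∈ A, p j * CLP j)
    (hopt : ∀ (C' : Fin n → ℝ) (E' : I → ℝ),
      (∀ j, p j ≤ C' j) →
      (∀ j, C' j ≤ E' (isl j)) →
      (∀ K K' : I, K' ≤ K → E' K' ≤ E' K) →
      (∀ A : Finset (Fin n),
        (1 / (2 * (m : ℝ))) * (∑ j ∈ A, p j) ^ 2 + (1 / 2) * ∑ j ∈ A, (p j) ^ 2
          ≤ ∑ j ∈ A, p j * C' j) →
      ∑ K, ω K * ELP K ≤ ∑ K, ω K * E' K)
    (hmono : Monotone fun j => CLP j - p j / 2)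
    (a : Fin n → Fin m) (S : Fin n → ℝ) (hfeas : FeasSched m p a S)
    (hlist : ∀ j, (m : ℝ) * S j ≤ ∑ i ∈ Finset.Iio j, p i) :
    ∀ (a' : Fin n → Fin m) (S' : Fin n → ℝ), FeasSched m p a' S' →
      ∑ K, ω K * energ isl (fun j => S j + p j) K
        ≤ 2 * ∑ K, ω K * energ isl (fun j => S' j + p j) K := by
  intro a' S' hfeas'
  have hm0 : (0 : ℝ) < m := by exact_mod_cast hm
  have hjob (j : Fin n) : S j + p j ≤ 2 * CLP j := by
    have h := le_of_mul_le_mul_left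
      ((hlist j).trans (sum_Iio_le_midpoint hm p CLP hp h1 h4 hmono j)) hm0
    linarith
  have hLP : ∑ K, ω K * ELP K ≤ ∑ K, ω K * energ isl (fun j => S' j + p j) K :=
    hopt (fun j => S' j + p j) _
      (fun j => by linarith [hfeas'.1 j])
      (fun j => le_energ isl (fun j => S' j + p j) le_rfl)
      (fun K K' hK => energ_le hsurj fun j hj =>
        le_energ isl (fun j => S' j + p j) (hj.trans hK))
      (parallel_ineq hm p hp a' S' hfeas')
  calc ∑ K, ω K * energ isl (fun j => S j + p j) K
      ≤ ∑ K, ω K * (2 * ELP K) := Finset.sum_le_sum fun K _ =>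
        mul_le_mul_of_nonneg_left (energ_le hsurj fun j hj => by
          linarith [hjob j, h2 j, h3 K (isl j) hj]) (hω K)
    _ = 2 * ∑ K, ω K * ELP K := by
        rw [Finset.mul_sum]
        exact Finset.sum_congr rfl fun K _ => by ring
    _ ≤ _ := by linarith
end

section
/- Assume ⪯ is the reflexive-transitive ancestor order of an out-forest on the islands (every island has at most one immediate predecessor). Among all linear orders π of 𝒥, there exists one minimizing the single-crew cost ∑_J ω_J·E_J(C^π) in which the jobs of each island occupy consecutive positions. -/
open scoped Classical in
/-- Single-crew completion time of job `j` under the linear (list) order `r`: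
the sum of the processing times of `j` and of all jobs preceding it. -/
noncomputable def Cpi {Jb : Type*} [Fintype Jb] (p : Jb → ℝ)
    (r : Jb → Jb → Prop) (j : Jb) : ℝ :=
  ∑ i ∈ Finset.univ.filter (fun i => r i j), p i

/-- Pulling back a linear order along an injective key. -/
lemma isLinearOrder_of_key {α β : Type*} [LinearOrder β] (f : α → β)
    (hf : Function.Injective f) : IsLinearOrder α (fun i j => f i ≤ f j) where
  refl _ := le_rfl
  trans _ _ _ := le_trans
  antisymm _ _ h h' := hf (le_antisymm h h')
  total _ _ := le_total _ _

/-- Every order of the jobs can be made island-consecutive without delaying any energization. -/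
lemma exists_consecutive_energ_le {Jb I : Type*} [Fintype Jb] [Fintype I] [PartialOrder I]
    (isl : Jb → I) (hsurj : Function.Surjective isl) (p : Jb → ℝ) (hp : ∀ j, 0 ≤ p j)
    (r : Jb → Jb → Prop) (hr : IsLinearOrder Jb r) :
    ∃ s : Jb → Jb → Prop, IsLinearOrder Jb s ∧
      (∀ K, energ isl (Cpi p s) K ≤ energ isl (Cpi p r) K) ∧
      (∀ i j k : Jb, isl i = isl k → s i j → s j k → isl j = isl i) := by
  classical
  let pos : Jb → ℕ := fun j => (Finset.univ.filter (fun i => r i j)).card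
  have hpos : ∀ i m, pos i ≤ pos m → r i m := by
    intro i m him
    by_contra hn
    have hmi : r m i := (hr.total i m).resolve_left hn
    refine absurd him (not_le.mpr (Finset.card_lt_card ?_))
    rw [Finset.ssubset_iff_of_subset]
    · exact ⟨i, by simpa using hr.refl i, by simpa using hn⟩
    · intro x hx
      simp only [Finset.mem_filter, Finset.mem_univ, true_and] at hx ⊢
      exact hr.trans _ _ _ hx hmi
  let L : I → ℕ := fun K => (Finset.univ.filter (fun j => isl j ≤ K)).sup pos
  have hL : ∀ j, pos j ≤ L (isl j) := fun j => Finset.le_sup (f := pos) (by simp)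
  have hLmono : Monotone L := by
    intro K K' h
    refine Finset.sup_mono fun x hx => ?_
    simp only [Finset.mem_filter, Finset.mem_univ, true_and] at hx ⊢
    exact hx.trans h
  have hLmax : ∀ K, ∃ m, isl m ≤ K ∧ L K = pos m := by
    intro K
    obtain ⟨j, hj⟩ := hsurj K
    obtain ⟨m, hm, h⟩ := Finset.exists_mem_eq_sup
      (Finset.univ.filter (fun j => isl j ≤ K)) ⟨j, by simp [hj]⟩ pos
    exact ⟨m, by simpa using hm, h⟩
  let g : I → ℕ ×ₗ Fin (Fintype.card I) := fun K => toLex (L K, Fintype.equivFin I K)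
  have hg : Function.Injective g := fun K K' h =>
    (Fintype.equivFin I).injective (congrArg (fun x => (ofLex x).2) h)
  have hgL : ∀ K K', g K ≤ g K' → L K ≤ L K' := by
    intro K K' h
    rcases Prod.Lex.toLex_le_toLex.mp h with h | h
    · exact h.le
    · exact h.1.le
  let f : Jb → (ℕ ×ₗ Fin (Fintype.card I)) ×ₗ Fin (Fintype.card Jb) :=
    fun j => toLex (g (isl j), Fintype.equivFin Jb j)
  have hf : Function.Injective f := fun j j' h =>
    (Fintype.equivFin Jb).injective (congrArg (fun x => (ofLex x).2) h)
  have hfg : ∀ i j, f i ≤ f j → g (isl i) ≤ g (isl j) := by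
    intro i j h
    rcases Prod.Lex.toLex_le_toLex.mp h with h | h
    · exact h.le
    · exact h.1.le
  refine ⟨fun i j => f i ≤ f j, isLinearOrder_of_key f hf, ?_, ?_⟩
  · intro K
    obtain ⟨j₀, hj₀⟩ := hsurj K
    have : Nonempty {j : Jb // isl j ≤ K} := ⟨⟨j₀, hj₀.le⟩⟩
    obtain ⟨m, hmK, hm⟩ := hLmax K
    refine ciSup_le fun j => ?_
    have hle : Cpi p (fun i j => f i ≤ f j) j.1 ≤ Cpi p r m := by
      refine Finset.sum_le_sum_of_subset_of_nonneg ?_ fun i _ _ => hp i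
      intro i hi
      simp only [Finset.mem_filter, Finset.mem_univ, true_and] at hi ⊢
      exact hpos i m (((hL i).trans (hgL _ _ (hfg _ _ hi))).trans
        ((hLmono j.2).trans hm.le))
    exact hle.trans (le_ciSup (f := fun j : {j : Jb // isl j ≤ K} => Cpi p r j.1)
      (Set.finite_range _).bddAbove ⟨m, hmK⟩)
  · intro i j k hik hij hjk
    refine hg (le_antisymm ?_ (hfg _ _ hij))
    rw [hik]
    exact hfg _ _ hjk

/-- If the island order is the ancestor order of an out-forest
(the predecessors of any island form a chain), then among all linear orders of
the jobs there is one minimizing the single-crew cost `∑_J ω_J E_J(C^π)` in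
which the jobs of each island occupy consecutive positions. -/
theorem exists_optimal_island_consecutive {Jb I : Type*} [Fintype Jb] [Fintype I]
    [Nonempty I] [PartialOrder I]
    (isl : Jb → I) (hsurj : Function.Surjective isl)
    (hforest : ∀ K K1 K2 : I, K1 ≤ K → K2 ≤ K → K1 ≤ K2 ∨ K2 ≤ K1)
    (p : Jb → ℝ) (hp : ∀ j, 0 ≤ p j)
    (ω : I → ℝ) (hω : ∀ K, 0 ≤ ω K) :
    ∃ r : Jb → Jb → Prop, IsLinearOrder Jb r ∧
      (∀ r' : Jb → Jb → Prop, IsLinearOrder Jb r' →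
        ∑ K, ω K * energ isl (Cpi p r) K ≤ ∑ K, ω K * energ isl (Cpi p r') K) ∧
      (∀ i j k : Jb, isl i = isl k → r i j → r j k → isl j = isl i) := by
  obtain ⟨r, hr, hmin⟩ := Set.exists_min_image {r : Jb → Jb → Prop | IsLinearOrder Jb r}
    (fun r => ∑ K, ω K * energ isl (Cpi p r) K) (Set.toFinite _)
    ⟨_, isLinearOrder_of_key _ (Fintype.equivFin Jb).injective⟩
  obtain ⟨s, hs, hle, hcons⟩ := exists_consecutive_energ_le isl hsurj p hp r hr
  refine ⟨s, hs, fun r' hr' => le_trans ?_ (hmin r' hr'), hcons⟩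
  exact Finset.sum_le_sum fun K _ => mul_le_mul_of_nonneg_left (hle K) (hω K)
end

section
/- Assume ⪯ is the reflexive-transitive ancestor order of an out-forest on the islands (every island has at most one immediate predecessor), and define the composite processing time p_J = ∑_{j ∈ J} p_j for each island J. Then the minimum over all linear orders π of 𝒥 of the single-crew cost ∑_J ω_J·E_J(C^π) equals the minimum over all linear extensions σ of ⪯ of ∑_J ω_J·C_J(σ), where C_J(σ) = ∑_{J' : J' ⪯_σ J} p_{J'}. (Single-crew repair scheduling is equivalent to 1|outtree|∑ w_J C_J on the composite jobs.) -/
open scoped Classical in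
/-- Composite processing time of island `K`: the total processing time of its jobs. -/
noncomputable def pComp {Jb I : Type*} [Fintype Jb] (isl : Jb → I) (p : Jb → ℝ)
    (K : I) : ℝ :=
  ∑ j ∈ Finset.univ.filter (fun j => isl j = K), p j

open scoped Classical in
theorem Cpi_pComp {Jb I : Type*} [Fintype Jb] [Fintype I] (isl : Jb → I) (p : Jb → ℝ)
    (s : I → I → Prop) (K : I) :
    Cpi (pComp isl p) s K = ∑ i ∈ Finset.univ.filter (fun i => s (isl i) K), p i := by
  unfold Cpi pComp
  simp only [Finset.sum_filter]
  simp only [← Finset.sum_filter (fun i => s i K)]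
  rw [Finset.sum_comm]
  refine Finset.sum_congr rfl fun j _ => ?_
  rw [Finset.sum_ite_eq]
  simp

open scoped Classical in
/-- Jobs completing no later than `m` have total length at most `C_m`: those scheduled after `m`
among them have length zero. -/
theorem sum_le_Cpi {Jb : Type*} [Fintype Jb] (p : Jb → ℝ) (hp : ∀ j, 0 ≤ p j)
    (r : Jb → Jb → Prop) (hr : IsLinearOrder Jb r) (m : Jb) :
    ∑ i ∈ Finset.univ.filter (fun i => Cpi p r i ≤ Cpi p r m), p i ≤ Cpi p r m := by
  have key : ∀ i, Cpi p r i ≤ Cpi p r m → ¬ r i m → p i = 0 := by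
    intro i hi him
    have hmi : r m i := (hr.total i m).resolve_left him
    have hsub : insert i (Finset.univ.filter (fun k => r k m)) ⊆
        Finset.univ.filter (fun k => r k i) := by
      intro k hk
      simp only [Finset.mem_insert, Finset.mem_filter, Finset.mem_univ, true_and] at hk ⊢
      rcases hk with rfl | hk
      · exact hr.refl k
      · exact hr.trans _ _ _ hk hmi
    have h1 := Finset.sum_le_sum_of_subset_of_nonneg hsub (f := p) (fun k _ _ => hp k)
    rw [Finset.sum_insert (by simpa using him)] at h1
    unfold Cpi at hi
    linarith [hp i]
  have hC : Cpi p r m = ∑ i, if r i m then p i else 0 := by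
    rw [Cpi, Finset.sum_filter]
  refine le_trans ?_ hC.ge
  rw [Finset.sum_filter]
  refine Finset.sum_le_sum fun i _ => ?_
  have := hp i
  have := key i
  grind

theorem exists_extension_le {Jb I : Type*} [Fintype Jb] [Fintype I] [PartialOrder I]
    (isl : Jb → I) (hsurj : Function.Surjective isl)
    (p : Jb → ℝ) (hp : ∀ j, 0 ≤ p j) (r : Jb → Jb → Prop) (hr : IsLinearOrder Jb r) :
    ∃ s : I → I → Prop, IsLinearOrder I s ∧ (∀ K K' : I, K' ≤ K → s K' K) ∧
      ∀ K, Cpi (pComp isl p) s K ≤ energ isl (Cpi p r) K := by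
  classical
  have hle : ∀ K j, isl j ≤ K → Cpi p r j ≤ energ isl (Cpi p r) K := fun K j hj =>
    le_ciSup (f := fun j : {j : Jb // isl j ≤ K} => Cpi p r j.1)
      (Set.finite_range _).bddAbove ⟨j, hj⟩
  have hne : ∀ K, Nonempty {j : Jb // isl j ≤ K} := fun K =>
    let ⟨j, hj⟩ := hsurj K
    ⟨⟨j, hj.le⟩⟩
  have hmono : ∀ K K', K' ≤ K → energ isl (Cpi p r) K' ≤ energ isl (Cpi p r) K := by
    intro K K' h
    have := hne K'
    exact ciSup_le fun j => hle K j.1 (j.2.trans h)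
  obtain ⟨t, ht, hext⟩ := extend_partialOrder ((· ≤ ·) : I → I → Prop)
  refine ⟨fun K' K => energ isl (Cpi p r) K' < energ isl (Cpi p r) K ∨
    (energ isl (Cpi p r) K' = energ isl (Cpi p r) K ∧ t K' K), ?_, ?_, ?_⟩
  · exact
      { refl := fun a => Or.inr ⟨rfl, ht.refl a⟩
        trans := fun a b c hab hbc => by
          have := ht.trans a b c
          grind
        antisymm := fun a b hab hba => by
          have := ht.antisymm a b
          grind
        total := fun a b => by
          have := ht.total a b
          grind }
  · intro K K' h
    rcases (hmono K K' h).lt_or_eq with h' | h'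
    · exact Or.inl h'
    · exact Or.inr ⟨h', hext _ _ h⟩
  · intro K
    have := hne K
    obtain ⟨m, hm⟩ := exists_eq_ciSup_of_finite (f := fun j : {j : Jb // isl j ≤ K} => Cpi p r j.1)
    change Cpi p r m.1 = energ isl (Cpi p r) K at hm
    rw [Cpi_pComp]
    refine le_trans ?_ ((sum_le_Cpi p hp r hr m.1).trans hm.le)
    refine Finset.sum_le_sum_of_subset_of_nonneg ?_ fun k _ _ => hp k
    intro i hi
    simp only [Finset.mem_filter, Finset.mem_univ, true_and] at hi ⊢
    have := hle (isl i) i le_rfl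
    rw [hm]
    grind

theorem exists_order_le {Jb I : Type*} [Fintype Jb] [Fintype I] [PartialOrder I]
    (isl : Jb → I) (hsurj : Function.Surjective isl)
    (p : Jb → ℝ) (hp : ∀ j, 0 ≤ p j) (s : I → I → Prop) (hs : IsLinearOrder I s)
    (hext : ∀ K K' : I, K' ≤ K → s K' K) :
    ∃ r : Jb → Jb → Prop, IsLinearOrder Jb r ∧
      ∀ K, energ isl (Cpi p r) K ≤ Cpi (pComp isl p) s K := by
  classical
  -- `e` fixes an arbitrary order of the jobs inside each island.
  let e := Fintype.equivFin Jb
  refine ⟨fun i j => (isl i ≠ isl j ∧ s (isl i) (isl j)) ∨ (isl i = isl j ∧ e i ≤ e j), ?_, ?_⟩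
  · exact
      { refl := fun a => Or.inr ⟨rfl, le_rfl⟩
        trans := fun a b c hab hbc => by
          have := hs.trans (isl a) (isl b) (isl c)
          have := hs.antisymm (isl a) (isl b)
          grind
        antisymm := fun a b hab hba => by
          have := hs.antisymm (isl a) (isl b)
          have : e a = e b → a = b := fun h => e.injective h
          grind
        total := fun a b => by
          have := hs.total (isl a) (isl b)
          grind }
  · intro K
    obtain ⟨j₀, hj₀⟩ := hsurj K
    have : Nonempty {j : Jb // isl j ≤ K} := ⟨⟨j₀, hj₀.le⟩⟩
    refine ciSup_le fun j => ?_
    rw [Cpi_pComp]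
    refine Finset.sum_le_sum_of_subset_of_nonneg ?_ fun k _ _ => hp k
    intro i hi
    simp only [Finset.mem_filter, Finset.mem_univ, true_and] at hi ⊢
    have hj := hext K _ j.2
    rcases hi with ⟨_, hi⟩ | ⟨hi, _⟩
    · exact hs.trans _ _ _ hi hj
    · rwa [hi]

/-- When the island order is the ancestor order of an out-forest,
the minimum single-crew cost `∑_J ω_J E_J(C^π)` over all linear orders of the
jobs equals the minimum of `∑_J ω_J C_J(σ)` over all linear extensions `σ` of
the island order, where the composite jobs have processing times
`p_J = ∑_{j ∈ J} p_j` (equivalence with `1|outtree|∑ w_J C_J`). -/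
theorem single_crew_equiv_outtree {Jb I : Type*} [Fintype Jb] [Fintype I]
    [Nonempty I] [PartialOrder I]
    (isl : Jb → I) (hsurj : Function.Surjective isl)
    (hforest : ∀ K K1 K2 : I, K1 ≤ K → K2 ≤ K → K1 ≤ K2 ∨ K2 ≤ K1)
    (p : Jb → ℝ) (hp : ∀ j, 0 ≤ p j)
    (ω : I → ℝ) (hω : ∀ K, 0 ≤ ω K) :
    sInf {c : ℝ | ∃ r : Jb → Jb → Prop, IsLinearOrder Jb r ∧
        c = ∑ K, ω K * energ isl (Cpi p r) K} =
    sInf {c : ℝ | ∃ s : I → I → Prop, IsLinearOrder I s ∧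
        (∀ K K' : I, K' ≤ K → s K' K) ∧
        c = ∑ K, ω K * Cpi (pComp isl p) s K} := by
  have hCnn : ∀ K s, 0 ≤ Cpi (pComp isl p) s K := fun K s =>
    Finset.sum_nonneg fun _ _ => Finset.sum_nonneg fun j _ => hp j
  have hEnn : ∀ K r, 0 ≤ energ isl (Cpi p r) K := fun K r =>
    Real.iSup_nonneg fun _ => Finset.sum_nonneg fun j _ => hp j
  obtain ⟨t, ht, htext⟩ := extend_partialOrder ((· ≤ ·) : I → I → Prop)
  obtain ⟨r₀, hr₀, -⟩ := exists_order_le isl hsurj p hp t ht (fun K K' h => htext _ _ h)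
  apply le_antisymm
  · refine le_csInf ⟨_, t, ht, fun K K' h => htext _ _ h, rfl⟩ ?_
    rintro c ⟨s, hs, hext, rfl⟩
    obtain ⟨r, hr, hle⟩ := exists_order_le isl hsurj p hp s hs hext
    refine le_trans (csInf_le ⟨0, ?_⟩ ⟨r, hr, rfl⟩)
      (Finset.sum_le_sum fun K _ => mul_le_mul_of_nonneg_left (hle K) (hω K))
    rintro c ⟨r, -, rfl⟩
    exact Finset.sum_nonneg fun K _ => mul_nonneg (hω K) (hEnn K r)
  · refine le_csInf ⟨_, r₀, hr₀, rfl⟩ ?_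
    rintro c ⟨r, hr, rfl⟩
    obtain ⟨s, hs, hext, hle⟩ := exists_extension_le isl hsurj p hp r hr
    refine le_trans (csInf_le ⟨0, ?_⟩ ⟨s, hs, hext, rfl⟩)
      (Finset.sum_le_sum fun K _ => mul_le_mul_of_nonneg_left (hle K) (hω K))
    rintro c ⟨s, -, -, rfl⟩
    exact Finset.sum_nonneg fun K _ => mul_nonneg (hω K) (hCnn K s)
end

section
/- Let π be a linear order of 𝒥 and let (a, S) be a feasible schedule of 𝒥 on m identical machines satisfying m·S_j ≤ ∑_{i : i ≺_π j} p_i for every job j, with completion times C_j = S_j + p_j. Then for every island J: E_J(C) ≤ (1/m)·E_J(C^π) + ((m−1)/m)·(max_{J' ⪯ J} max_{j ∈ J'} p_j). -/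
open scoped Classical in
/-- If a feasible `m`-machine schedule satisfies the list bound
`m·S_j ≤ ∑_{i ≺_π j} p_i` for a linear order `π` of the jobs, then every island
`J` satisfies `E_J(C) ≤ (1/m)·E_J(C^π) + ((m−1)/m)·max_{J' ⪯ J} max_{j ∈ J'} p_j`
(where `C_j = S_j + p_j` and `energ isl p J = max_{J' ⪯ J} max_{j ∈ J'} p_j`). -/
theorem conversion_energization_bound {Jb I : Type*} [Fintype Jb] [Fintype I]
    [Nonempty I] [PartialOrder I]
    (m : ℕ) (hm : 1 ≤ m)
    (isl : Jb → I) (hsurj : Function.Surjective isl)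
    (p : Jb → ℝ) (hp : ∀ j, 0 ≤ p j)
    (r : Jb → Jb → Prop) (hr : IsLinearOrder Jb r)
    (a : Jb → Fin m) (S : Jb → ℝ) (hfeas : FeasSched m p a S)
    (hlist : ∀ j, (m : ℝ) * S j
      ≤ ∑ i ∈ Finset.univ.filter (fun i => r i j ∧ i ≠ j), p i) :
    ∀ K : I, energ isl (fun j => S j + p j) K
      ≤ (1 / (m : ℝ)) * energ isl (Cpi p r) K
        + (((m : ℝ) - 1) / (m : ℝ)) * energ isl p K := by
  intro K
  have hm0 : (0 : ℝ) < m := by exact_mod_cast hm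
  have hm1 : (1 : ℝ) ≤ m := by exact_mod_cast hm
  obtain ⟨j₀, hj₀⟩ := hsurj K
  -- Without nonemptiness the suprema would take the junk value `0`.
  haveI : Nonempty {j : Jb // isl j ≤ K} := ⟨⟨j₀, hj₀.le⟩⟩
  refine ciSup_le fun j => ?_
  have hC : Cpi p r j.1 ≤ energ isl (Cpi p r) K :=
    le_ciSup (f := fun j : {j : Jb // isl j ≤ K} => Cpi p r j.1)
      (Set.finite_range _).bddAbove j
  have hP : p j.1 ≤ energ isl p K :=
    le_ciSup (f := fun j : {j : Jb // isl j ≤ K} => p j.1)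
      (Set.finite_range _).bddAbove j
  have hl := hlist j.1
  have hsplit : Cpi p r j.1
      = ∑ i ∈ Finset.univ.filter (fun i => r i j.1 ∧ i ≠ j.1), p i + p j.1 := by
    have hmem : j.1 ∈ Finset.univ.filter (fun i => r i j.1) := by
      simpa using hr.refl j.1
    have herase : Finset.univ.filter (fun i => r i j.1 ∧ i ≠ j.1)
        = (Finset.univ.filter (fun i => r i j.1)).erase j.1 := by
      ext i
      simp [and_comm]
    rw [herase, Finset.sum_erase_add _ _ hmem, Cpi]
  have hPm : ((m : ℝ) - 1) * p j.1 ≤ ((m : ℝ) - 1) * energ isl p K :=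
    mul_le_mul_of_nonneg_left hP (by linarith)
  have key : (S j.1 + p j.1) * m
      ≤ energ isl (Cpi p r) K + ((m : ℝ) - 1) * energ isl p K := by
    nlinarith
  calc S j.1 + p j.1
      ≤ (energ isl (Cpi p r) K + ((m : ℝ) - 1) * energ isl p K) / m :=
        (le_div_iff₀ hm0).2 key
    _ = _ := by ring
end
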